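/- Let q ∈ ℂ with 0 < |q| < 1 and let t ∈ ℂ∖{0} with t ∉ q^ℤ. Then, as the natural number r tends to infinity, g^{(0,0)}(q^r t, q)/θ(q^r t; q) tends to −1/(q;q)_∞² and g^{(0,1)}(q^r t, q)/θ(q^r t; q) tends to 0. -/

import Mathlib

open Finset Filter

/-- Finite q-Pochhammer symbol `(x;q)_k = ∏_{j=0}^{k-1} (1 - x q^j)`. -/
noncomputable def qPoch (x q : ℂ) (k : ℕ) : ℂ := ∏ j ∈ Finset.range k, (1 - x * q ^ j)

/-- Infinite q-Pochhammer symbol `(x;q)_∞ = ∏_{j=0}^{∞} (1 - x q^j)`. -/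
noncomputable def qPochInf (x q : ℂ) : ℂ := ∏' j : ℕ, (1 - x * q ^ j)

/-- The Jacobi theta function `θ(t;q) = Σ_{k∈ℤ} (−1)^k q^{k(k+1)/2} t^k`. -/
noncomputable def jtheta (t q : ℂ) : ℂ :=
  ∑' k : ℤ, (-1 : ℂ) ^ k * q ^ (k * (k + 1) / 2) * t ^ k

/-- The derivative `θ'(t;q) = Σ_{k∈ℤ} (−1)^k k q^{k(k+1)/2} t^k` (with respect to t d/dt). -/
noncomputable def jthetaD (t q : ℂ) : ℂ :=
  ∑' k : ℤ, (-1 : ℂ) ^ k * (k : ℂ) * q ^ (k * (k + 1) / 2) * t ^ k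

/-- The Eisenstein-type series `E₁(q) = 1 − 4 Σ_{j=1}^∞ q^j/(1−q^j)`. -/
noncomputable def E1 (q : ℂ) : ℂ := 1 - 4 * ∑' j : ℕ, q ^ (j + 1) / (1 - q ^ (j + 1))

/-- The Appell-Lerch sum
`AL(t,λ,q) = θ(λ;q)⁻¹ Σ_{ℓ∈ℤ} (−1)^ℓ q^{ℓ(ℓ+1)/2} λ^ℓ / (1 − λ t q^ℓ)`. -/
noncomputable def AL (t lam q : ℂ) : ℂ :=
  (jtheta lam q)⁻¹ *
    ∑' k : ℤ, (-1 : ℂ) ^ k * q ^ (k * (k + 1) / 2) * lam ^ k / (1 - lam * t * q ^ k)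

/-- The solution `g^{(0,0)}(t,q) = Σ_{k≥0} (−1)^k q^{k(k+1)/2} (q;q)_k^{−2} t^{−1−k}`. -/
noncomputable def g00 (t q : ℂ) : ℂ :=
  ∑' k : ℕ, (-1 : ℂ) ^ k * q ^ (k * (k + 1) / 2) / (qPoch q q k) ^ 2 * t ^ (-1 - (k : ℤ))

/-- The solution `g^{(0,1)}(t,q)`. -/
noncomputable def g01 (t q : ℂ) : ℂ :=
  ∑' k : ℕ,
    (E1 q / 2 - 1 / 2 - jthetaD t⁻¹ q / jtheta t⁻¹ q +
        ∑ j ∈ Finset.range k, (1 + q ^ (j + 1)) / (1 - q ^ (j + 1))) *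
      ((-1 : ℂ) ^ k * q ^ (k * (k + 1) / 2) / (qPoch q q k) ^ 2 * t ^ (-1 - (k : ℤ)))


open Topology

/-- General term of the theta series. -/
noncomputable def thW (q x : ℂ) (k : ℤ) : ℂ := (-1 : ℂ) ^ k * q ^ (k * (k + 1) / 2) * x ^ k

lemma tri_add (k r : ℤ) :
    (k + r) * (k + r + 1) / 2 = k * (k + 1) / 2 + r * (r + 1) / 2 + r * k := by
  obtain ⟨a, ha⟩ := (Int.even_mul_succ_self k).two_dvd
  obtain ⟨b, hb⟩ := (Int.even_mul_succ_self r).two_dvd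
  have h : (k + r) * (k + r + 1) = 2 * (a + b + r * k) := by linear_combination ha + hb
  rw [h, ha, hb]
  simp

lemma thW_ne {q x : ℂ} (hq : q ≠ 0) (hx : x ≠ 0) (k : ℤ) : thW q x k ≠ 0 := by
  unfold thW
  exact mul_ne_zero (mul_ne_zero (zpow_ne_zero _ (by norm_num)) (zpow_ne_zero _ hq))
    (zpow_ne_zero _ hx)

lemma thW_add {q x : ℂ} (hq : q ≠ 0) (hx : x ≠ 0) (k r : ℤ) :
    thW q x (k + r) = thW q x r * thW q (q ^ r * x) k := by
  unfold thW
  rw [tri_add, zpow_add₀ hq, zpow_add₀ hq, zpow_add₀ hx, zpow_add₀ (by norm_num : (-1 : ℂ) ≠ 0),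
    mul_zpow, zpow_mul]
  ring

lemma thW_one (q x : ℂ) : thW q x 1 = -(q * x) := by
  unfold thW; norm_num

lemma thW_neg_one (q x : ℂ) : thW q x (-1) = -x⁻¹ := by
  unfold thW; norm_num

lemma thW_zero (q x : ℂ) : thW q x 0 = 1 := by
  unfold thW; norm_num

lemma thW_succ {q x : ℂ} (hq : q ≠ 0) (hx : x ≠ 0) (n : ℕ) :
    thW q x ((n + 1 : ℕ) : ℤ) = thW q x n * (-(q * x) * q ^ n) := by
  have := thW_add hq hx 1 n
  rw [thW_one] at this
  rw [show ((n + 1 : ℕ) : ℤ) = 1 + n by push_cast; ring, this, zpow_natCast]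
  ring

lemma thW_neg_succ {q x : ℂ} (hq : q ≠ 0) (hx : x ≠ 0) (n : ℕ) :
    thW q x (-((n + 1 : ℕ) : ℤ)) = thW q x (-(n : ℤ)) * (-x⁻¹ * q ^ n) := by
  have := thW_add hq hx (-1) (-n)
  rw [thW_neg_one] at this
  rw [show (-((n + 1 : ℕ) : ℤ)) = -1 + -n by push_cast; ring, this, zpow_neg, zpow_natCast,
    mul_inv, inv_inv]
  ring

lemma thW_inv {q x : ℂ} (hx : x ≠ 0) (k : ℤ) :
    thW q x⁻¹ (-1 - k) = -x * thW q x k := by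
  unfold thW
  rw [show (-1 - k) * (-1 - k + 1) = k * (k + 1) by ring, inv_zpow', show -(-1 - k) = 1 + k by ring,
    zpow_add₀ hx, zpow_one, zpow_sub₀ (by norm_num : (-1 : ℂ) ≠ 0), ]
  rcases Int.even_or_odd k with h | h <;> simp [h.neg_one_zpow, mul_left_comm]

lemma summable_rec {q A : ℂ} (hq0 : q ≠ 0) (hq1 : ‖q‖ < 1) (hA : A ≠ 0) (f : ℕ → ℂ)
    (hf : ∀ n, f n ≠ 0) (hrec : ∀ n, f (n + 1) = f n * (A * q ^ n)) :
    Summable (fun n : ℕ => (1 + (n : ℝ)) * ‖f n‖) := by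
  refine summable_of_ratio_test_tendsto_lt_one (l := 0) one_pos ?_ ?_
  · filter_upwards with n
    have := norm_pos_iff.2 (hf n)
    positivity
  · have h1 : Tendsto (fun n : ℕ => 2 * (‖A‖ * ‖q‖ ^ n)) atTop (𝓝 0) := by
      simpa using ((tendsto_pow_atTop_nhds_zero_of_lt_one (norm_nonneg q) hq1).const_mul
        ‖A‖).const_mul 2
    refine squeeze_zero (fun n => by positivity) (fun n => ?_) h1
    have := norm_pos_iff.2 (hf n)
    rw [hrec, Real.norm_of_nonneg (by positivity), Real.norm_of_nonneg (by positivity),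
      div_le_iff₀ (by positivity), norm_mul, norm_mul, norm_pow]
    push_cast
    have h2 : (0 : ℝ) ≤ ‖f n‖ * (‖A‖ * ‖q‖ ^ n) := by positivity
    have hn : (0 : ℝ) ≤ n := by positivity
    nlinarith [mul_nonneg hn h2]

lemma thW_summable {q x : ℂ} (hq0 : q ≠ 0) (hq1 : ‖q‖ < 1) (hx : x ≠ 0) :
    Summable (fun m : ℤ => (1 + |(m : ℝ)|) * ‖thW q x m‖) := by
  apply Summable.of_nat_of_neg
  · have := summable_rec hq0 hq1 (neg_ne_zero.2 (mul_ne_zero hq0 hx)) (fun n : ℕ => thW q x n)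
      (fun n => thW_ne hq0 hx _) (fun n => thW_succ hq0 hx n)
    simpa using this
  · have := summable_rec hq0 hq1 (neg_ne_zero.2 (inv_ne_zero hx)) (fun n : ℕ => thW q x (-n))
      (fun n => thW_ne hq0 hx _) (fun n => thW_neg_succ hq0 hx n)
    simpa using this

lemma thW_summable0 {q x : ℂ} (hq0 : q ≠ 0) (hq1 : ‖q‖ < 1) (hx : x ≠ 0) :
    Summable (fun m : ℤ => thW q x m) := by
  refine Summable.of_norm_bounded (thW_summable hq0 hq1 hx) (fun m => ?_)
  nlinarith [mul_nonneg (abs_nonneg (m : ℝ)) (norm_nonneg (thW q x m))]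

lemma thW_summable1 {q x : ℂ} (hq0 : q ≠ 0) (hq1 : ‖q‖ < 1) (hx : x ≠ 0) :
    Summable (fun m : ℤ => (m : ℂ) * thW q x m) := by
  refine Summable.of_norm_bounded (thW_summable hq0 hq1 hx) (fun m => ?_)
  rw [norm_mul, Complex.norm_intCast]
  nlinarith [norm_nonneg (thW q x m)]

lemma jtheta_eq (q x : ℂ) : jtheta x q = ∑' k : ℤ, thW q x k := rfl

lemma jthetaD_eq (q x : ℂ) : jthetaD x q = ∑' k : ℤ, (k : ℂ) * thW q x k := by
  unfold jthetaD thW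
  exact tsum_congr (fun k => by ring)

lemma jtheta_shift {q x : ℂ} (hq0 : q ≠ 0) (hx : x ≠ 0) (r : ℤ) :
    jtheta x q = thW q x r * jtheta (q ^ r * x) q := by
  rw [jtheta_eq, jtheta_eq, ← tsum_mul_left, ← (Equiv.addRight r).tsum_eq]
  exact tsum_congr (fun k => thW_add hq0 hx k r)

lemma jthetaD_shift {q x : ℂ} (hq0 : q ≠ 0) (hq1 : ‖q‖ < 1) (hx : x ≠ 0) (r : ℤ) :
    jthetaD x q - r * jtheta x q = thW q x r * jthetaD (q ^ r * x) q := by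
  rw [jtheta_eq, jthetaD_eq, jthetaD_eq, ← tsum_mul_left, ← tsum_mul_left,
    ← (thW_summable1 hq0 hq1 hx).tsum_sub ((thW_summable0 hq0 hq1 hx).mul_left _),
    ← (Equiv.addRight r).tsum_eq]
  refine tsum_congr (fun k => ?_)
  simp only [Equiv.coe_addRight]
  rw [thW_add hq0 hx k r]
  push_cast
  ring

lemma jtheta_inv {q x : ℂ} (hx : x ≠ 0) :
    jtheta x⁻¹ q = -x * jtheta x q := by
  rw [jtheta_eq, jtheta_eq, ← tsum_mul_left, ← (Equiv.subLeft (-1 : ℤ)).tsum_eq]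
  exact tsum_congr (fun k => thW_inv hx k)

lemma tannery {w : ℤ → ℂ} (hw : Summable (fun m : ℤ => (1 + |(m : ℝ)|) * ‖w m‖))
    (c : ℕ → ℕ → ℂ) (L : ℤ → ℂ) (C : ℝ)
    (hc : ∀ n k : ℕ, ‖c n k‖ ≤ C * (1 + |((k : ℤ) - n : ℤ)|))
    (hL : ∀ m : ℤ, Tendsto (fun n : ℕ => c n (m + n).toNat) atTop (𝓝 (L m))) :
    Tendsto (fun n : ℕ => ∑' k : ℕ, w ((k : ℤ) - n) * c n k) atTop (𝓝 (∑' m : ℤ, w m * L m)) := by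
  have hC : 0 ≤ C := by
    have := (norm_nonneg _).trans (hc 0 0)
    simpa using this
  let F : ℕ → ℤ → ℂ := fun n m => if 0 ≤ m + n then w m * c n (m + n).toNat else 0
  have hF : ∀ n : ℕ, ∑' k : ℕ, w ((k : ℤ) - n) * c n k = ∑' m : ℤ, F n m := by
    intro n
    have hinj : Function.Injective (fun k : ℕ => (k : ℤ) - n) := fun a b h => by
      simpa using h
    rw [← hinj.tsum_eq (f := F n)]
    · exact tsum_congr (fun k => by simp [F])
    · intro m hm
      simp only [Function.mem_support, F] at hm
      have h0 : 0 ≤ m + n := by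
        by_contra h
        simp [h] at hm
      exact ⟨(m + n).toNat, by simp [Int.toNat_of_nonneg h0]⟩
  simp_rw [hF]
  refine tendsto_tsum_of_dominated_convergence (hw.mul_left C) (fun m => ?_) ?_
  · refine ((hL m).const_mul (w m)).congr' ?_
    filter_upwards [eventually_ge_atTop m.natAbs] with n hn
    have : 0 ≤ m + n := by omega
    simp [F, this]
  · filter_upwards with n m
    by_cases h : 0 ≤ m + n
    · simp only [F, h, if_true, norm_mul]
      have := hc n (m + n).toNat
      rw [Int.toNat_of_nonneg h, show m + n - n = m by ring] at this
      calc _ ≤ ‖w m‖ * (C * (1 + |(m : ℝ)|)) := by gcongr; simpa using this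
        _ = _ := by ring
    · simp only [F, h, if_false, norm_zero]
      positivity

/-- Gaussian binomial coefficients. -/
noncomputable def qbin (q : ℂ) : ℕ → ℕ → ℂ
  | _, 0 => 1
  | 0, _ + 1 => 0
  | N + 1, k + 1 => qbin q N (k + 1) + q ^ (N - k) * qbin q N k

lemma qbin_zero_right (q : ℂ) (N : ℕ) : qbin q N 0 = 1 := by
  cases N <;> simp [qbin]

lemma qbin_of_lt (q : ℂ) : ∀ N k : ℕ, N < k → qbin q N k = 0
  | _, 0, h => by omega
  | 0, k + 1, _ => by simp [qbin]
  | N + 1, k + 1, h => by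
    rw [qbin, qbin_of_lt q N (k + 1) (by omega), qbin_of_lt q N k (by omega)]
    simp

lemma qPoch_succ (q : ℂ) (k : ℕ) : qPoch q q (k + 1) = qPoch q q k * (1 - q ^ (k + 1)) := by
  unfold qPoch
  rw [Finset.prod_range_succ, pow_succ']

lemma qPoch_zero (q : ℂ) : qPoch q q 0 = 1 := by simp [qPoch]

lemma qbin_mul (q : ℂ) : ∀ N k m : ℕ, N = k + m →
    qbin q N k * (qPoch q q k * qPoch q q m) = qPoch q q N
  | N, 0, m, h => by
    obtain rfl : N = m := by omega
    simp [qbin_zero_right, qPoch_zero]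
  | 0, k + 1, m, h => by omega
  | N + 1, k + 1, 0, h => by
    obtain rfl : N = k := by omega
    have h1 := qbin_mul q N N 0 (by omega)
    rw [qPoch_zero] at h1 ⊢
    rw [qbin, qbin_of_lt q N (N + 1) (by omega), Nat.sub_self, qPoch_succ]
    linear_combination (1 - q ^ (N + 1)) * h1
  | N + 1, k + 1, m + 1, h => by
    have h1 := qbin_mul q N (k + 1) m (by omega)
    have h2 := qbin_mul q N k (m + 1) (by omega)
    have e : N - k = m + 1 := by omega
    have e2 : q ^ (N + 1) = q ^ (k + 1) * q ^ (m + 1) := by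
      rw [← pow_add]; congr 1
    rw [qbin, e, qPoch_succ q N, e2]
    rw [qPoch_succ q m] at h2 ⊢
    rw [qPoch_succ q k] at h1 ⊢
    linear_combination (1 - q ^ (m + 1)) * h1 + q ^ (m + 1) * (1 - q ^ (k + 1)) * h2

lemma q_binomial {q z : ℂ} (hq : q ≠ 0) (hz : z ≠ 0) (N : ℕ) :
    ∏ j ∈ Finset.range N, (1 - z * q ^ (j + 1)) =
      ∑ k ∈ Finset.range (N + 1), thW q z k * qbin q N k := by
  induction N with
  | zero => simp [thW_zero, qbin_zero_right]
  | succ N ih =>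
    rw [Finset.prod_range_succ, ih, Finset.sum_range_succ' _ (N + 1)]
    have h1 : ∑ k ∈ Finset.range (N + 1), thW q z k * qbin q N k =
        ∑ k ∈ Finset.range (N + 1), thW q z ((k + 1 : ℕ) : ℤ) * qbin q N (k + 1)
          + thW q z ((0 : ℕ) : ℤ) * qbin q (N + 1) 0 := by
      rw [qbin_zero_right, ← qbin_zero_right q N,
        ← Finset.sum_range_succ' (fun k : ℕ => thW q z k * qbin q N k) (N + 1),
        Finset.sum_range_succ _ (N + 1), qbin_of_lt q N (N + 1) (by omega)]
      simp
    have h2 : ∑ k ∈ Finset.range (N + 1), thW q z ((k + 1 : ℕ) : ℤ) * qbin q (N + 1) (k + 1) =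
        ∑ k ∈ Finset.range (N + 1), thW q z ((k + 1 : ℕ) : ℤ) * qbin q N (k + 1)
        - z * q ^ (N + 1) * ∑ k ∈ Finset.range (N + 1), thW q z k * qbin q N k := by
      rw [Finset.mul_sum, ← Finset.sum_sub_distrib]
      refine Finset.sum_congr rfl (fun k hk => ?_)
      have hk' : k ≤ N := by simpa [Nat.lt_succ_iff] using hk
      have e : q ^ (N + 1) = q * (q ^ k * q ^ (N - k)) := by
        rw [← pow_add, Nat.add_sub_cancel' hk', pow_succ']
      rw [e, qbin, thW_succ hq hz]
      ring
    rw [h2]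
    linear_combination h1

lemma one_sub_pow_ne {q : ℂ} (hq1 : ‖q‖ < 1) (j : ℕ) : 1 - q ^ (j + 1) ≠ 0 := by
  intro h
  have h1 : ‖q ^ (j + 1)‖ < 1 := by
    rw [norm_pow]; exact pow_lt_one₀ (norm_nonneg _) hq1 (by omega)
  rw [← sub_eq_zero.1 h] at h1
  simp at h1

lemma qPoch_ne {q : ℂ} (hq1 : ‖q‖ < 1) (k : ℕ) : qPoch q q k ≠ 0 := by
  induction k with
  | zero => simp [qPoch_zero]
  | succ k ih => rw [qPoch_succ]; exact mul_ne_zero ih (one_sub_pow_ne hq1 k)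

lemma prod_lim {q : ℂ} (hq1 : ‖q‖ < 1) (a : ℂ) (ha : ∀ j : ℕ, 1 - a * q ^ j ≠ 0) :
    Tendsto (fun n => ∏ j ∈ Finset.range n, (1 - a * q ^ j)) atTop (𝓝 (∏' j : ℕ, (1 - a * q ^ j)))
    ∧ ∏' j : ℕ, (1 - a * q ^ j) ≠ 0 := by
  have hs : Summable (fun j : ℕ => ‖-(a * q ^ j)‖) := by
    simp only [norm_neg, norm_mul, norm_pow]
    exact (summable_geometric_of_lt_one (norm_nonneg q) hq1).mul_left _
  simp only [sub_eq_add_neg] at ha ⊢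
  exact ⟨(multipliable_one_add_of_summable hs).hasProd.tendsto_prod_nat,
    tprod_one_add_ne_zero_of_summable ha hs⟩

lemma qPoch_lim {q : ℂ} (hq1 : ‖q‖ < 1) :
    Tendsto (qPoch q q) atTop (𝓝 (qPochInf q q)) ∧ qPochInf q q ≠ 0 :=
  prod_lim hq1 q (fun j => by rw [← pow_succ']; exact one_sub_pow_ne hq1 j)

lemma exists_bd {f : ℕ → ℂ} {a : ℂ} (h : Tendsto f atTop (𝓝 a)) : ∃ C : ℝ, 0 ≤ C ∧ ∀ n, ‖f n‖ ≤ C := by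
  obtain ⟨C, hC⟩ := (Metric.isBounded_range_of_tendsto f h).exists_norm_le
  exact ⟨C, (norm_nonneg _).trans (hC (f 0) ⟨0, rfl⟩), fun n => hC _ ⟨n, rfl⟩⟩

lemma qbin_bd {q : ℂ} (hq1 : ‖q‖ < 1) : ∃ C : ℝ, 0 ≤ C ∧ ∀ N k, ‖qbin q N k‖ ≤ C := by
  obtain ⟨hl, hne⟩ := qPoch_lim hq1
  obtain ⟨A, hA0, hA⟩ := exists_bd hl
  obtain ⟨B, hB0, hB⟩ := exists_bd (hl.inv₀ hne)
  refine ⟨A * (B * B), by positivity, fun N k => ?_⟩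
  rcases lt_or_ge N k with h | h
  · rw [qbin_of_lt q N k h, norm_zero]; positivity
  · have := qbin_mul q N k (N - k) (by omega)
    have h1 := qPoch_ne hq1 k
    have h2 := qPoch_ne hq1 (N - k)
    have e : qbin q N k = qPoch q q N * ((qPoch q q k)⁻¹ * (qPoch q q (N - k))⁻¹) := by
      rw [← this]; field_simp
    rw [e, norm_mul, norm_mul]
    exact mul_le_mul (hA _) (mul_le_mul (hB _) (hB _) (norm_nonneg _) hB0) (by positivity) hA0

lemma tendsto_shift (m : ℤ) : Tendsto (fun n : ℕ => (m + n).toNat) atTop atTop := by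
  refine tendsto_atTop.2 (fun b => ?_)
  filter_upwards [eventually_ge_atTop (b + m.natAbs)] with n hn
  omega

lemma qbin_lim {q : ℂ} (hq1 : ‖q‖ < 1) (m : ℤ) :
    Tendsto (fun n : ℕ => qbin q (2 * n) (m + n).toNat) atTop (𝓝 (qPochInf q q)⁻¹) := by
  obtain ⟨hl, hne⟩ := qPoch_lim hq1
  have h0 : Tendsto (fun n : ℕ => 2 * n) atTop atTop :=
    tendsto_id.const_mul_atTop' (by norm_num)
  have h1 := (hl.comp h0).mul (((hl.inv₀ hne).comp (tendsto_shift m)).mul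
    ((hl.inv₀ hne).comp (tendsto_shift (-m))))
  rw [show qPochInf q q * ((qPochInf q q)⁻¹ * (qPochInf q q)⁻¹) = (qPochInf q q)⁻¹ by
    field_simp] at h1
  refine h1.congr' ?_
  filter_upwards [eventually_ge_atTop m.natAbs] with n hn
  simp only [Function.comp]
  have := qbin_mul q (2 * n) (m + n).toNat (-m + n).toNat (by omega)
  have h1 := qPoch_ne hq1 (m + n).toNat
  have h2 := qPoch_ne hq1 (-m + n).toNat
  rw [← this]; field_simp

lemma half_prod {q x : ℂ} (hq : q ≠ 0) (hx : x ≠ 0) (n : ℕ) :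
    thW q x (-(n : ℤ)) * ∏ j ∈ Finset.range n, (1 - x * (q ^ j)⁻¹) =
      ∏ j ∈ Finset.range n, (1 - x⁻¹ * q ^ j) := by
  induction n with
  | zero => simp [thW_zero]
  | succ n ih =>
    rw [Finset.prod_range_succ, Finset.prod_range_succ, ← ih, thW_neg_succ hq hx]
    have : q ^ n ≠ 0 := pow_ne_zero _ hq
    field_simp
    ring

lemma full_prod {q x : ℂ} (hq : q ≠ 0) (hx : x ≠ 0) (n : ℕ) :
    ∑' k : ℕ, thW q x ((k : ℤ) - n) * qbin q (2 * n) k =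
      (∏ j ∈ Finset.range n, (1 - x⁻¹ * q ^ j)) * ∏ j ∈ Finset.range n, (1 - x * q * q ^ j) := by
  rw [tsum_eq_sum (s := Finset.range (2 * n + 1))
    (fun k hk => by rw [qbin_of_lt q _ _ (by simpa using hk), mul_zero])]
  have hz : q ^ (-(n : ℤ)) * x ≠ 0 := mul_ne_zero (zpow_ne_zero _ hq) hx
  have h := q_binomial hq hz (2 * n)
  have h2 : ∑ k ∈ Finset.range (2 * n + 1), thW q x ((k : ℤ) - n) * qbin q (2 * n) k =
      thW q x (-(n : ℤ)) * ∏ j ∈ Finset.range (2 * n), (1 - q ^ (-(n : ℤ)) * x * q ^ (j + 1)) := by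
    rw [h, Finset.mul_sum]
    refine Finset.sum_congr rfl (fun k _ => ?_)
    rw [sub_eq_add_neg, thW_add hq hx]
    ring
  rw [h2, two_mul, Finset.prod_range_add, ← half_prod hq hx, ← Finset.prod_range_reflect]
  have hqn : q ^ n ≠ 0 := pow_ne_zero _ hq
  rw [mul_assoc]
  congr 2
  · refine Finset.prod_congr rfl (fun j hj => ?_)
    have hj' := Finset.mem_range.1 hj
    have e : q ^ n = q ^ (n - 1 - j + 1) * q ^ j := by
      rw [← pow_add]; congr 1; omega
    have hj1 : q ^ j ≠ 0 := pow_ne_zero _ hq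
    have hj2 : q ^ (n - 1 - j + 1) ≠ 0 := pow_ne_zero _ hq
    rw [zpow_neg, zpow_natCast, e]
    field_simp
  · refine Finset.prod_congr rfl (fun j hj => ?_)
    rw [zpow_neg, zpow_natCast, add_assoc, pow_add, pow_succ]
    field_simp

lemma jtheta_ne {q x : ℂ} (hq : q ≠ 0) (hq1 : ‖q‖ < 1) (hx : x ≠ 0) (hxq : ∀ n : ℤ, x ≠ q ^ n) :
    jtheta x q ≠ 0 := by
  obtain ⟨C, hC0, hC⟩ := qbin_bd hq1
  have h1 := tannery (thW_summable hq hq1 hx) (fun n k => qbin q (2 * n) k)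
    (fun _ => (qPochInf q q)⁻¹) C (fun n k => (hC _ _).trans
      (le_mul_of_one_le_right hC0 (by simp))) (qbin_lim hq1)
  simp only [full_prod hq hx] at h1
  obtain ⟨a1, a2⟩ := prod_lim hq1 x⁻¹ (fun j h => hxq j (by
    rw [sub_eq_zero] at h
    rw [zpow_natCast]
    field_simp at h
    exact h))
  obtain ⟨b1, b2⟩ := prod_lim hq1 (x * q) (fun j h => hxq (-(j + 1 : ℕ)) (by
    rw [sub_eq_zero] at h
    rw [zpow_neg, zpow_natCast]
    refine eq_inv_of_mul_eq_one_left ?_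
    rw [h, pow_succ]
    ring))
  have h2 := tendsto_nhds_unique h1 (a1.mul b1)
  rw [tsum_mul_right, ← jtheta_eq] at h2
  intro h0
  rw [h0, zero_mul] at h2
  exact mul_ne_zero a2 b2 h2.symm

lemma thW_nat (q x : ℂ) (k : ℕ) : thW q x k = (-1 : ℂ) ^ k * q ^ (k * (k + 1) / 2) * x ^ k := by
  unfold thW
  rw [zpow_natCast, zpow_natCast, ← zpow_natCast q (k * (k + 1) / 2)]
  push_cast
  rfl

lemma thW_inv_neg {q t : ℂ} (hq : q ≠ 0) (ht : t ≠ 0) (r : ℤ) :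
    thW q t⁻¹ (-r) * q ^ r = thW q t r := by
  have h1 := thW_inv (q := q) ht (r - 1)
  have h2 := thW_add hq ht 1 (r - 1)
  rw [thW_one, show 1 + (r - 1) = r by ring] at h2
  rw [show -1 - (r - 1) = -r by ring] at h1
  have h3 : q ^ r = q ^ (r - 1) * q := by rw [← zpow_add_one₀ hq]; simp
  rw [h1, h2, h3]
  ring

lemma term_eq {q t : ℂ} (hq : q ≠ 0) (ht : t ≠ 0) (r k : ℕ) (d : ℂ) :
    (-1 : ℂ) ^ k * q ^ (k * (k + 1) / 2) / d * (q ^ r * t) ^ (-1 - (k : ℤ)) /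
        jtheta (q ^ r * t) q =
      t⁻¹ / jtheta t q * (thW q t⁻¹ ((k : ℤ) - r) * d⁻¹) := by
  have h1 := jtheta_shift hq ht (r : ℤ)
  have h2 := thW_inv_neg hq ht (r : ℤ)
  have h3 := thW_add hq (inv_ne_zero ht) k (-(r : ℤ))
  rw [zpow_natCast] at h1 h2
  have hr : q ^ r ≠ 0 := pow_ne_zero _ hq
  have hT : q ^ r * t ≠ 0 := mul_ne_zero hr ht
  have h4 : q ^ (-(r : ℤ)) * t⁻¹ = (q ^ r * t)⁻¹ := by
    rw [zpow_neg, zpow_natCast, mul_inv]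
  rw [h4, thW_nat] at h3
  rw [h1, sub_eq_add_neg (k : ℤ), h3, ← h2, show (-1 - (k : ℤ)) = -((k + 1 : ℕ) : ℤ) by push_cast; ring,
    zpow_neg, zpow_natCast, pow_succ (q ^ r * t), inv_pow]
  have h5 := thW_ne hq (inv_ne_zero ht) (-(r : ℤ))
  have h6 : (q ^ r * t) ^ k ≠ 0 := pow_ne_zero _ hT
  generalize (q ^ r * t) ^ k = Z at *
  generalize thW q t⁻¹ (-(r : ℤ)) = V at *
  generalize jtheta (q ^ r * t) q = J at *
  rw [div_eq_mul_inv, div_eq_mul_inv, div_eq_mul_inv]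
  simp only [mul_inv]
  field_simp

/-- As `r → ∞`, `g^{(0,0)}(q^r t, q)/θ(q^r t;q)` tends to `−1/(q;q)_∞²` and
`g^{(0,1)}(q^r t, q)/θ(q^r t;q)` tends to `0`. -/
theorem g00_g01_theta_limits
    (q : ℂ) (hq0 : 0 < ‖q‖) (hq1 : ‖q‖ < 1)
    (t : ℂ) (ht : t ≠ 0) (htq : ∀ n : ℤ, t ≠ q ^ n) :
    Tendsto (fun r : ℕ => g00 (q ^ r * t) q / jtheta (q ^ r * t) q) atTop
      (nhds (-(1 / qPochInf q q ^ 2))) ∧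
    Tendsto (fun r : ℕ => g01 (q ^ r * t) q / jtheta (q ^ r * t) q) atTop
      (nhds 0) := by
  have hq : q ≠ 0 := norm_pos_iff.1 hq0
  have hs : t⁻¹ ≠ 0 := inv_ne_zero ht
  have hθ := jtheta_ne hq hq1 ht htq
  have hθs : jtheta t⁻¹ q ≠ 0 := by
    rw [jtheta_inv ht]; exact mul_ne_zero (neg_ne_zero.2 ht) hθ
  obtain ⟨hl, hne⟩ := qPoch_lim hq1
  have hl2 : Tendsto (fun k => (qPoch q q k ^ 2)⁻¹) atTop (𝓝 (qPochInf q q ^ 2)⁻¹) :=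
    (hl.pow 2).inv₀ (pow_ne_zero 2 hne)
  obtain ⟨B, hB0, hB⟩ := exists_bd hl2
  have hsum := thW_summable hq hq1 hs
  constructor
  · have h1 := tannery hsum (fun _ k => (qPoch q q k ^ 2)⁻¹) (fun _ => (qPochInf q q ^ 2)⁻¹) B
      (fun n k => (hB _).trans (le_mul_of_one_le_right hB0 (by simp)))
      (fun m => hl2.comp (tendsto_shift m))
    have h2 := h1.const_mul (t⁻¹ / jtheta t q)
    rw [tsum_mul_right, ← jtheta_eq, jtheta_inv ht] at h2
    have e : t⁻¹ / jtheta t q * (-t * jtheta t q * (qPochInf q q ^ 2)⁻¹) =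
        -(1 / qPochInf q q ^ 2) := by field_simp
    rw [e] at h2
    refine h2.congr (fun r => ?_)
    rw [g00, ← tsum_div_const, ← tsum_mul_left]
    exact tsum_congr (fun k => (term_eq hq ht r k _).symm)
  · -- the partial Lambert sums
    set S : ℂ := ∑' j : ℕ, q ^ (j + 1) / (1 - q ^ (j + 1)) with hS
    set Lg : ℂ := jthetaD t⁻¹ q / jtheta t⁻¹ q with hLg
    have hSs : Summable (fun j : ℕ => q ^ (j + 1) / (1 - q ^ (j + 1))) := by
      refine Summable.of_norm_bounded
        (g := fun j : ℕ => ‖q‖ ^ j * (1 - ‖q‖)⁻¹)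
        ((summable_geometric_of_lt_one (norm_nonneg q) hq1).mul_right _) (fun j => ?_)
      have hp : ‖q‖ ^ (j + 1) ≤ ‖q‖ := by
        simpa using pow_le_pow_of_le_one (norm_nonneg q) hq1.le (show 1 ≤ j + 1 by omega)
      have hd : 1 - ‖q‖ ≤ ‖1 - q ^ (j + 1)‖ := by
        have := norm_sub_norm_le (1 : ℂ) (q ^ (j + 1))
        rw [norm_one, norm_pow] at this
        linarith
      have h1q : 0 < 1 - ‖q‖ := by linarith
      rw [norm_div, div_eq_mul_inv, norm_pow]
      refine mul_le_mul (pow_le_pow_of_le_one (norm_nonneg q) hq1.le (by omega))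
        (inv_anti₀ h1q hd) (by positivity) (by positivity)
    have hSl := hSs.hasSum.tendsto_sum_nat
    rw [← hS] at hSl
    let a : ℕ → ℂ := fun k => 2 * (∑ j ∈ Finset.range k, q ^ (j + 1) / (1 - q ^ (j + 1)) - S) - Lg
    have hal : Tendsto a atTop (𝓝 (-Lg)) := by
      have := ((hSl.sub_const S).const_mul 2).sub_const Lg
      simpa [a] using this
    obtain ⟨A, hA0, hA⟩ := exists_bd hal
    have h1 := tannery hsum
      (fun r k => (((k : ℤ) - r : ℤ) + a k) * (qPoch q q k ^ 2)⁻¹)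
      (fun m => ((m : ℂ) + -Lg) * (qPochInf q q ^ 2)⁻¹) ((1 + A) * B)
      (fun n k => by
        rw [norm_mul]
        have e1 : ‖(((k : ℤ) - n : ℤ) : ℂ) + a k‖ ≤ (1 + A) * (1 + |(((k : ℤ) - n : ℤ) : ℝ)|) := by
          refine (norm_add_le _ _).trans ?_
          rw [Complex.norm_intCast]
          have := hA k
          nlinarith [abs_nonneg (((k : ℤ) - n : ℤ) : ℝ),
            mul_nonneg hA0 (abs_nonneg (((k : ℤ) - n : ℤ) : ℝ))]
        calc _ ≤ ((1 + A) * (1 + |(((k : ℤ) - n : ℤ) : ℝ)|)) * B :=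
              mul_le_mul e1 (hB k) (norm_nonneg _) (by positivity)
          _ = _ := by push_cast; ring)
      (fun m => by
        refine Tendsto.mul ?_ (hl2.comp (tendsto_shift m))
        refine ((hal.comp (tendsto_shift m)).const_add (m : ℂ)).congr' ?_
        filter_upwards [eventually_ge_atTop m.natAbs] with n hn
        have h0 : 0 ≤ m + n := by omega
        simp only [Function.comp, Int.toNat_of_nonneg h0]
        rw [show m + n - n = m by ring])
    have h2 := h1.const_mul (t⁻¹ / jtheta t q)
    have e : ∑' m : ℤ, thW q t⁻¹ m * (((m : ℂ) + -Lg) * (qPochInf q q ^ 2)⁻¹) = 0 := by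
      have e1 : ∀ m : ℤ, thW q t⁻¹ m * (((m : ℂ) + -Lg) * (qPochInf q q ^ 2)⁻¹) =
          ((m : ℂ) * thW q t⁻¹ m - Lg * thW q t⁻¹ m) * (qPochInf q q ^ 2)⁻¹ := fun m => by ring
      simp_rw [e1]
      rw [tsum_mul_right, (thW_summable1 hq hq1 hs).tsum_sub
        ((thW_summable0 hq hq1 hs).mul_left _), tsum_mul_left, ← jtheta_eq, ← jthetaD_eq, hLg,
        div_mul_cancel₀ _ hθs, sub_self, zero_mul]
    rw [e, mul_zero] at h2
    refine h2.congr (fun r => ?_)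
    have hlog : jthetaD (q ^ r * t)⁻¹ q / jtheta (q ^ r * t)⁻¹ q = Lg + r := by
      have h4 : (q ^ r * t)⁻¹ = q ^ (-(r : ℤ)) * t⁻¹ := by
        rw [zpow_neg, zpow_natCast, mul_inv]
      have h5 := jtheta_shift hq hs (-(r : ℤ))
      have h6 := jthetaD_shift hq hq1 hs (-(r : ℤ))
      have h7 := thW_ne hq hs (-(r : ℤ))
      rw [h4, ← mul_div_mul_left _ _ h7, ← h5, ← h6, hLg, sub_div, mul_div_cancel_right₀ _ hθs]
      push_cast
      ring
    rw [g01, ← tsum_div_const, ← tsum_mul_left]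
    refine tsum_congr (fun k => ?_)
    have hcoef : E1 q / 2 - 1 / 2 - jthetaD (q ^ r * t)⁻¹ q / jtheta (q ^ r * t)⁻¹ q +
        ∑ j ∈ Finset.range k, (1 + q ^ (j + 1)) / (1 - q ^ (j + 1)) =
        (((k : ℤ) - r : ℤ) : ℂ) + a k := by
      have e3 : ∑ j ∈ Finset.range k, (1 + q ^ (j + 1)) / (1 - q ^ (j + 1)) =
          k + 2 * ∑ j ∈ Finset.range k, q ^ (j + 1) / (1 - q ^ (j + 1)) := by
        rw [Finset.mul_sum]
        have : (k : ℂ) = ∑ j ∈ Finset.range k, (1 : ℂ) := by simp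
        rw [this, ← Finset.sum_add_distrib]
        refine Finset.sum_congr rfl (fun j _ => ?_)
        have := one_sub_pow_ne hq1 j
        field_simp
        ring
      rw [hlog, e3, E1, ← hS]
      simp only [a]
      push_cast
      ring
    rw [hcoef, mul_div_assoc, term_eq hq ht]
    ring
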